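/- Let α ∈ (0, 1/2), T > 0 and δ ∈ (0,1). Then there exist constants C₁ > 0, C₂ > 0 and λ* > 0 such that for all t ∈ [δT, T] and all λ ≥ λ*, C₁ · |E_{2α,1}(−λ² t^{2α})| ≤ |E_{2α,α}(−λ² t^{2α})| ≤ C₂ · |E_{2α,1}(−λ² t^{2α})|. -/

import Mathlib

/-- The two-parameter Mittag–Leffler function restricted to real arguments:
`E_{α,β}(x) = ∑ xⁿ / Γ(αn + β)`. -/
noncomputable def mittagLefflerReal (α β x : ℝ) : ℝ :=
  ∑' n : ℕ, x ^ n / Real.Gamma (α * n + β)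

open MeasureTheory Set Filter Topology Asymptotics Complex
open scoped Real Interval

/-!
In the logarithmic coordinate `w = log z`, Hankel's loop is the boundary of a half-strip, and
`1 / Γ(s) = (1 / 2πi) ∫ e ^ z * z ^ (-s) dz`. Substituting this into the power series and summing
the geometric series under the integral gives, for `0 < a < 1` and `x > 0`,
`E_{a,b}(-x) = (1 / 2πi) ∫ e ^ z * z ^ (a - b) / (z ^ a + x) dz`.
On the loop `|z ^ a + x| ≥ x * cos (aπ / 2)`, so dominated convergence yields
`x * E_{a,b}(-x) → 1 / Γ(b - a)` as `x → ∞`. Whenever `b - a` is not a pole of `Γ`, the function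
`E_{a,b}(-x)` is therefore of exact order `1 / x`; this applies to `a = 2α` with `b = 1` and with
`b = α`.
-/

/-! ### Hankel integrals -/

/-- The closed half-strip `ρ ≤ re w`, `|im w| ≤ π`, which is bounded by the Hankel contour. -/
def halfStrip (ρ : ℝ) : Set ℂ :=
  {w | ρ ≤ w.re ∧ |w.im| ≤ π}

/-- The integral of `f` along the boundary of `halfStrip ρ`, coming in from `+∞ - πi` and going out
to `+∞ + πi`. It is the classical Hankel loop around the negative real axis in the logarithmic
coordinate `w = log z`, in which no branch cut is needed. -/
noncomputable def hankelIntegral (f : ℂ → ℂ) (ρ : ℝ) : ℂ :=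
  (∫ u : ℝ in Ioi ρ, f (u + π * I)) - (∫ u : ℝ in Ioi ρ, f (u + (-π : ℝ) * I)) +
    I * ∫ θ : ℝ in -π..π, f (ρ + θ * I)

/-- Integrability of `f` on each of the three pieces of the contour of `hankelIntegral`. -/
structure HankelIntegrable (f : ℂ → ℂ) (ρ : ℝ) : Prop where
  upper : IntegrableOn (fun u : ℝ ↦ f (u + π * I)) (Ioi ρ)
  lower : IntegrableOn (fun u : ℝ ↦ f (u + (-π : ℝ) * I)) (Ioi ρ)
  cross : IntervalIntegrable (fun θ : ℝ ↦ f (ρ + θ * I)) volume (-π) π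

theorem add_mul_I_mem_halfStrip {ρ u η : ℝ} :
    (u + η * I : ℂ) ∈ halfStrip ρ ↔ ρ ≤ u ∧ |η| ≤ π := by
  simp [halfStrip]

theorem ray_mem_halfStrip {ρ u η : ℝ} (hη : |η| = π) (hu : u ∈ Ioi ρ) :
    (u + η * I : ℂ) ∈ halfStrip ρ :=
  add_mul_I_mem_halfStrip.2 ⟨hu.le, hη.le⟩

theorem cross_mem_halfStrip (ρ : ℝ) {θ : ℝ} (hθ : θ ∈ Ι (-π) π) :
    (ρ + θ * I : ℂ) ∈ halfStrip ρ := by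
  rw [uIoc_of_le (neg_le_self Real.pi_pos.le)] at hθ
  exact add_mul_I_mem_halfStrip.2 ⟨le_rfl, abs_le.2 ⟨hθ.1.le, hθ.2⟩⟩

theorem abs_neg_pi : |(-π : ℝ)| = π := by
  rw [abs_neg, abs_of_pos Real.pi_pos]

section Integration

variable {ρ : ℝ} {f g : ℂ → ℂ}

theorem aestronglyMeasurable_ray {η : ℝ} (hf : ContinuousOn f (halfStrip ρ))
    (hη : |η| = π) :
    AEStronglyMeasurable (fun u : ℝ ↦ f (u + η * I)) (volume.restrict (Ioi ρ)) :=
  (hf.comp (by fun_prop) fun _ hu ↦ ray_mem_halfStrip hη hu).aestronglyMeasurable measurableSet_Ioi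

theorem aestronglyMeasurable_cross (hf : ContinuousOn f (halfStrip ρ)) :
    AEStronglyMeasurable (fun θ : ℝ ↦ f (ρ + θ * I)) (volume.restrict (Ι (-π) π)) :=
  (hf.comp (by fun_prop) fun _ hθ ↦ cross_mem_halfStrip ρ hθ).aestronglyMeasurable
    measurableSet_uIoc

theorem HankelIntegrable.mono (hg : HankelIntegrable g ρ) (hf : ContinuousOn f (halfStrip ρ))
    {C : ℝ} (hfg : ∀ w ∈ halfStrip ρ, ‖f w‖ ≤ C * ‖g w‖) : HankelIntegrable f ρ := by
  have on_ray {η : ℝ} (hη : |η| = π) (hint : IntegrableOn (fun u : ℝ ↦ g (u + η * I)) (Ioi ρ)) :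
      IntegrableOn (fun u : ℝ ↦ f (u + η * I)) (Ioi ρ) :=
    Integrable.mono' (hint.norm.const_mul C) (aestronglyMeasurable_ray hf hη) <|
      (ae_restrict_mem measurableSet_Ioi).mono fun u hu ↦ hfg _ (ray_mem_halfStrip hη hu)
  refine ⟨on_ray (abs_of_pos Real.pi_pos) hg.upper, on_ray abs_neg_pi hg.lower, ?_⟩
  exact (hg.cross.norm.const_mul C).mono_fun' (aestronglyMeasurable_cross hf) <|
    (ae_restrict_mem measurableSet_uIoc).mono fun θ hθ ↦ hfg _ (cross_mem_halfStrip ρ hθ)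

theorem HankelIntegrable.const_mul (hf : HankelIntegrable f ρ) (c : ℂ) :
    HankelIntegrable (fun w ↦ c * f w) ρ :=
  ⟨hf.upper.const_mul c, hf.lower.const_mul c, hf.cross.const_mul c⟩

theorem HankelIntegrable.sub (hf : HankelIntegrable f ρ) (hg : HankelIntegrable g ρ) :
    HankelIntegrable (fun w ↦ f w - g w) ρ :=
  ⟨hf.upper.sub hg.upper, hf.lower.sub hg.lower, hf.cross.sub hg.cross⟩

theorem hankelIntegral_const_mul (c : ℂ) (f : ℂ → ℂ) (ρ : ℝ) :
    hankelIntegral (fun w ↦ c * f w) ρ = c * hankelIntegral f ρ := by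
  simp only [hankelIntegral, integral_const_mul, intervalIntegral.integral_const_mul]
  ring

theorem hankelIntegral_sub (hf : HankelIntegrable f ρ) (hg : HankelIntegrable g ρ) :
    hankelIntegral (fun w ↦ f w - g w) ρ = hankelIntegral f ρ - hankelIntegral g ρ := by
  simp only [hankelIntegral, integral_sub hf.upper hg.upper, integral_sub hf.lower hg.lower,
    intervalIntegral.integral_sub hf.cross hg.cross]
  ring

theorem tendsto_hankelIntegral_of_dominated {ι : Type*} {l : Filter ι} [l.IsCountablyGenerated]
    {F : ι → ℂ → ℂ} (hF : ∀ᶠ i in l, ContinuousOn (F i) (halfStrip ρ))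
    (hg : HankelIntegrable g ρ) (hFg : ∀ᶠ i in l, ∀ w ∈ halfStrip ρ, ‖F i w‖ ≤ ‖g w‖)
    (hlim : ∀ w ∈ halfStrip ρ, Tendsto (F · w) l (𝓝 (f w))) :
    Tendsto (fun i ↦ hankelIntegral (F i) ρ) l (𝓝 (hankelIntegral f ρ)) := by
  have on_ray {η : ℝ} (hη : |η| = π) (hint : IntegrableOn (fun u : ℝ ↦ g (u + η * I)) (Ioi ρ)) :
      Tendsto (fun i ↦ ∫ u : ℝ in Ioi ρ, F i (u + η * I)) l
        (𝓝 (∫ u : ℝ in Ioi ρ, f (u + η * I))) := by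
    have ae_mem : ∀ᵐ u : ℝ ∂volume.restrict (Ioi ρ), (u + η * I : ℂ) ∈ halfStrip ρ :=
      (ae_restrict_mem measurableSet_Ioi).mono fun _ ↦ ray_mem_halfStrip hη
    exact tendsto_integral_filter_of_dominated_convergence (fun u ↦ ‖g (u + η * I)‖)
      (hF.mono fun i hi ↦ aestronglyMeasurable_ray hi hη)
      (hFg.mono fun i hi ↦ ae_mem.mono fun u hu ↦ hi _ hu) hint.norm
      (ae_mem.mono fun u hu ↦ hlim _ hu)
  have on_cross : Tendsto (fun i ↦ ∫ θ : ℝ in -π..π, F i (ρ + θ * I)) l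
      (𝓝 (∫ θ : ℝ in -π..π, f (ρ + θ * I))) :=
    intervalIntegral.tendsto_integral_filter_of_dominated_convergence
      (fun θ ↦ ‖g (ρ + θ * I)‖) (hF.mono fun i hi ↦ aestronglyMeasurable_cross hi)
      (hFg.mono fun i hi ↦ .of_forall fun θ hθ ↦ hi _ (cross_mem_halfStrip ρ hθ)) hg.cross.norm
      (.of_forall fun θ hθ ↦ hlim _ (cross_mem_halfStrip ρ hθ))
  exact ((on_ray (abs_of_pos Real.pi_pos) hg.upper).sub (on_ray abs_neg_pi hg.lower)).add
    (on_cross.const_mul I)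

theorem hasSum_hankelIntegral_of_dominated {ι : Type*} [Countable ι] {F : ι → ℂ → ℂ} {q : ι → ℝ}
    (hF : ∀ i, ContinuousOn (F i) (halfStrip ρ)) (hg : HankelIntegrable g ρ) (hq : Summable q)
    (hFg : ∀ i, ∀ w ∈ halfStrip ρ, ‖F i w‖ ≤ ‖g w‖ * q i)
    (hsum : ∀ w ∈ halfStrip ρ, HasSum (F · w) (f w)) :
    HasSum (fun i ↦ hankelIntegral (F i) ρ) (hankelIntegral f ρ) := by
  have on_ray {η : ℝ} (hη : |η| = π) (hint : IntegrableOn (fun u : ℝ ↦ g (u + η * I)) (Ioi ρ)) :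
      HasSum (fun i ↦ ∫ u : ℝ in Ioi ρ, F i (u + η * I)) (∫ u : ℝ in Ioi ρ, f (u + η * I)) := by
    have ae_mem : ∀ᵐ u : ℝ ∂volume.restrict (Ioi ρ), (u + η * I : ℂ) ∈ halfStrip ρ :=
      (ae_restrict_mem measurableSet_Ioi).mono fun _ ↦ ray_mem_halfStrip hη
    refine hasSum_integral_of_dominated_convergence (fun i u ↦ ‖g (u + η * I)‖ * q i)
      (fun i ↦ aestronglyMeasurable_ray (hF i) hη)
      (fun i ↦ ae_mem.mono fun u hu ↦ hFg i _ hu) (.of_forall fun u ↦ hq.mul_left _) ?_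
      (ae_mem.mono fun u hu ↦ hsum _ hu)
    simpa only [tsum_mul_left] using hint.norm.mul_const _
  have on_cross : HasSum (fun i ↦ ∫ θ : ℝ in -π..π, F i (ρ + θ * I))
      (∫ θ : ℝ in -π..π, f (ρ + θ * I)) := by
    refine intervalIntegral.hasSum_integral_of_dominated_convergence
      (fun i θ ↦ ‖g (ρ + θ * I)‖ * q i) (fun i ↦ aestronglyMeasurable_cross (hF i))
      (fun i ↦ .of_forall fun θ hθ ↦ hFg i _ (cross_mem_halfStrip ρ hθ))
      (.of_forall fun θ _ ↦ hq.mul_left _) ?_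
      (.of_forall fun θ hθ ↦ hsum _ (cross_mem_halfStrip ρ hθ))
    simpa only [tsum_mul_left] using hg.cross.norm.mul_const _
  exact ((on_ray (abs_of_pos Real.pi_pos) hg.upper).sub (on_ray abs_neg_pi hg.lower)).add
    (on_cross.mul_left I)

theorem hankelIntegral_eq_of_differentiableOn {ρ' : ℝ} (hρ : ρ ≤ ρ')
    (hf : DifferentiableOn ℂ f (halfStrip ρ)) (hint : HankelIntegrable f ρ) :
    hankelIntegral f ρ = hankelIntegral f ρ' := by
  have rect_subset : [[ρ, ρ']] ×ℂ [[-π, π]] ⊆ halfStrip ρ := fun w hw ↦ by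
    rw [uIcc_of_le hρ, uIcc_of_le (neg_le_self Real.pi_pos.le)] at hw
    exact ⟨hw.1.1, abs_le.2 hw.2⟩
  have rect_integral := integral_boundary_rect_eq_zero_of_differentiableOn f ⟨ρ, -π⟩ ⟨ρ', π⟩
    (hf.mono rect_subset)
  have split_upper := intervalIntegral.integral_interval_add_Ioi hint.upper
    (hint.upper.mono_set (Ioi_subset_Ioi hρ))
  have split_lower := intervalIntegral.integral_interval_add_Ioi hint.lower
    (hint.lower.mono_set (Ioi_subset_Ioi hρ))
  simp only [smul_eq_mul] at rect_integral
  rw [hankelIntegral, hankelIntegral, ← split_upper, ← split_lower]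
  linear_combination -rect_integral

theorem hankelIntegral_deriv_eq_zero {f' : ℂ → ℂ}
    (hderiv : ∀ w ∈ halfStrip ρ, HasDerivAt f (f' w) w) (hint : HankelIntegrable f' ρ)
    (hupper : Tendsto (fun u : ℝ ↦ f (u + π * I)) atTop (𝓝 0))
    (hlower : Tendsto (fun u : ℝ ↦ f (u + (-π : ℝ) * I)) atTop (𝓝 0)) :
    hankelIntegral f' ρ = 0 := by
  have on_ray {η : ℝ} (hη : |η| = π) (hi : IntegrableOn (fun u : ℝ ↦ f' (u + η * I)) (Ioi ρ))
      (hlim : Tendsto (fun u : ℝ ↦ f (u + η * I)) atTop (𝓝 0)) :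
      ∫ u : ℝ in Ioi ρ, f' (u + η * I) = 0 - f (ρ + η * I) :=
    integral_Ioi_of_hasDerivAt_of_tendsto' (f := fun u : ℝ ↦ f (u + η * I))
      (fun u hu ↦ ((hderiv _ (add_mul_I_mem_halfStrip.2 ⟨hu, hη.le⟩)).comp_add_const
        _ _).comp_ofReal) hi hlim
  have on_cross : ∫ θ : ℝ in -π..π, f' (ρ + θ * I) * I = f (ρ + π * I) - f (ρ + (-π : ℝ) * I) := by
    refine intervalIntegral.integral_eq_sub_of_hasDerivAt (f := fun θ : ℝ ↦ f (ρ + θ * I))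
      (fun θ hθ ↦ ?_) (hint.cross.mul_const I)
    rw [uIcc_of_le (neg_le_self Real.pi_pos.le)] at hθ
    have hpath : HasDerivAt (fun z : ℂ ↦ ρ + z * I) I θ := by
      simpa using ((hasDerivAt_id (θ : ℂ)).mul_const I).const_add (ρ : ℂ)
    have hw := add_mul_I_mem_halfStrip.2 ⟨le_refl ρ, abs_le.2 hθ⟩
    exact ((hderiv _ hw).comp (θ : ℂ) hpath).comp_ofReal
  rw [intervalIntegral.integral_mul_const] at on_cross
  rw [hankelIntegral, on_ray (abs_of_pos Real.pi_pos) hint.upper hupper,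
    on_ray abs_neg_pi hint.lower hlower]
  linear_combination on_cross

end Integration

/-! ### Hankel's formula for the reciprocal Gamma function -/

/-- The integrand `e ^ z * z ^ (-s) dz` of Hankel's integral for `1 / Γ(s)` in the coordinate
`z = exp w`. -/
noncomputable def hankelKernel (s w : ℂ) : ℂ :=
  cexp (cexp w + (1 - s) * w)

theorem hankelKernel_add (s c w : ℂ) :
    hankelKernel (s + c) w = hankelKernel s w * cexp (-(c * w)) := by
  rw [hankelKernel, hankelKernel, ← Complex.exp_add]
  ring_nf

theorem differentiable_hankelKernel (s : ℂ) : Differentiable ℂ (hankelKernel s) := by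
  unfold hankelKernel
  fun_prop

theorem hasDerivAt_hankelKernel_add_one (s w : ℂ) :
    HasDerivAt (hankelKernel (s + 1)) (hankelKernel s w - s * hankelKernel (s + 1) w) w := by
  have hexponent : HasDerivAt (fun w ↦ cexp w + (1 - (s + 1)) * w)
      (cexp w + (1 - (s + 1)) * 1) w :=
    (Complex.hasDerivAt_exp w).add ((hasDerivAt_id w).const_mul _)
  refine hexponent.cexp.congr_deriv ?_
  have hshift : hankelKernel s w = hankelKernel (s + 1) w * cexp w := by
    rw [hankelKernel_add, mul_assoc, ← Complex.exp_add, one_mul, neg_add_cancel, Complex.exp_zero,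
      mul_one]
  rw [hshift, hankelKernel]
  ring

theorem hankelKernel_ray {η : ℝ} (hη : cexp (η * I) = -1) (s : ℂ) (u : ℝ) :
    hankelKernel s (u + η * I) =
      cexp (-Real.exp u + (1 - s) * u) * cexp ((1 - s) * η * I) := by
  rw [hankelKernel, Complex.exp_add (u : ℂ), hη, ofReal_exp, ← Complex.exp_add]
  ring_nf

theorem exp_ofReal_neg_pi_mul_I : cexp ((-π : ℝ) * I) = -1 := by
  rw [ofReal_neg, neg_mul, exp_neg_pi_mul_I]

theorem tendsto_neg_exp_add_mul_atBot (c : ℝ) :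
    Tendsto (fun u : ℝ ↦ -Real.exp u + c * u) atTop atBot := by
  have hlittle : (fun u ↦ c * u) =o[atTop] Real.exp := by
    simpa using (Real.isLittleO_pow_exp_atTop (n := 1)).const_mul_left c
  have hle : ∀ᶠ u : ℝ in atTop, -Real.exp u + c * u ≤ -(1 / 2) * Real.exp u := by
    filter_upwards [hlittle.bound one_half_pos] with u hu
    rw [Real.norm_of_nonneg (Real.exp_pos u).le] at hu
    linarith [Real.le_norm_self (c * u)]
  exact tendsto_atBot_mono' _ hle (Real.tendsto_exp_atTop.const_mul_atTop_of_neg (by norm_num))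

theorem norm_cexp_neg_exp_add_mul (c : ℂ) (u : ℝ) :
    ‖cexp (-Real.exp u + c * u)‖ = Real.exp (-Real.exp u + c.re * u) := by
  rw [Complex.norm_exp, add_re, neg_re, ofReal_re, re_mul_ofReal]

theorem tendsto_cexp_neg_exp_add_mul_atTop (c : ℂ) :
    Tendsto (fun u : ℝ ↦ cexp (-Real.exp u + c * u)) atTop (𝓝 0) := by
  rw [tendsto_zero_iff_norm_tendsto_zero]
  simp only [norm_cexp_neg_exp_add_mul]
  exact Real.tendsto_exp_atBot.comp (tendsto_neg_exp_add_mul_atBot c.re)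

theorem integrableOn_Ioi_cexp_neg_exp_add_mul (c : ℂ) (ρ : ℝ) :
    IntegrableOn (fun u : ℝ ↦ cexp (-Real.exp u + c * u)) (Ioi ρ) := by
  have hreal : IntegrableOn (fun u ↦ Real.exp (-Real.exp u + c.re * u)) (Ioi ρ) := by
    refine integrable_of_isBigO_exp_neg one_pos (by fun_prop) ?_
    rw [Real.isBigO_exp_comp_exp_comp]
    refine ((tendsto_neg_exp_add_mul_atBot (c.re + 1)).congr fun u ↦ ?_).isBoundedUnder_le_atBot
    simp only [Pi.sub_apply]
    ring
  exact hreal.mono' (Continuous.aestronglyMeasurable (by fun_prop))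
    (.of_forall fun u ↦ (norm_cexp_neg_exp_add_mul c u).le)

theorem hankelIntegrable_hankelKernel (s : ℂ) (ρ : ℝ) : HankelIntegrable (hankelKernel s) ρ := by
  have on_ray {η : ℝ} (hη : cexp (η * I) = -1) :
      IntegrableOn (fun u : ℝ ↦ hankelKernel s (u + η * I)) (Ioi ρ) := by
    simp only [hankelKernel_ray hη]
    exact (integrableOn_Ioi_cexp_neg_exp_add_mul (1 - s) ρ).mul_const _
  refine ⟨on_ray exp_pi_mul_I, on_ray exp_ofReal_neg_pi_mul_I, Continuous.intervalIntegrable ?_ _ _⟩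
  exact (differentiable_hankelKernel s).continuous.comp (by fun_prop)

theorem hankelIntegral_hankelKernel_eq (s : ℂ) (ρ ρ' : ℝ) :
    hankelIntegral (hankelKernel s) ρ = hankelIntegral (hankelKernel s) ρ' := by
  wlog hρ : ρ ≤ ρ' generalizing ρ ρ'
  · exact (this ρ' ρ (le_of_not_ge hρ)).symm
  exact hankelIntegral_eq_of_differentiableOn hρ (differentiable_hankelKernel s).differentiableOn
    (hankelIntegrable_hankelKernel s ρ)

theorem hankelIntegral_hankelKernel_eq_mul_add_one (s : ℂ) (ρ : ℝ) :
    hankelIntegral (hankelKernel s) ρ = s * hankelIntegral (hankelKernel (s + 1)) ρ := by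
  have on_ray {η : ℝ} (hη : cexp (η * I) = -1) :
      Tendsto (fun u : ℝ ↦ hankelKernel (s + 1) (u + η * I)) atTop (𝓝 0) := by
    simpa only [hankelKernel_ray hη, zero_mul] using
      (tendsto_cexp_neg_exp_add_mul_atTop (1 - (s + 1))).mul_const _
  have hs := hankelIntegrable_hankelKernel s ρ
  have hs' : HankelIntegrable (fun w ↦ s * hankelKernel (s + 1) w) ρ :=
    (hankelIntegrable_hankelKernel (s + 1) ρ).const_mul s
  have hzero := hankelIntegral_deriv_eq_zero (fun w _ ↦ hasDerivAt_hankelKernel_add_one s w)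
    (hs.sub hs') (on_ray exp_pi_mul_I) (on_ray exp_ofReal_neg_pi_mul_I)
  rwa [hankelIntegral_sub hs hs', hankelIntegral_const_mul, sub_eq_zero] at hzero

theorem abs_exp_smul_gammaIntegrand (c : ℂ) (u : ℝ) :
    |Real.exp u| • (((Real.exp (-Real.exp u) : ℝ) : ℂ) * (Real.exp u : ℂ) ^ (c - 1)) =
      cexp (-Real.exp u + c * u) := by
  rw [abs_of_pos (Real.exp_pos u), real_smul, cpow_def_of_ne_zero (by simp), ← ofReal_log
    (Real.exp_pos u).le, Real.log_exp, ofReal_exp, ofReal_exp, ← Complex.exp_add, ← Complex.exp_add]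
  push_cast
  ring_nf

theorem integrable_cexp_neg_exp_add_mul {c : ℂ} (hc : 0 < c.re) :
    Integrable (fun u : ℝ ↦ cexp (-Real.exp u + c * u)) := by
  have h := integrableOn_image_iff_integrableOn_abs_deriv_smul MeasurableSet.univ
    (fun u _ ↦ (Real.hasDerivAt_exp u).hasDerivWithinAt) Real.exp_injective.injOn
    (fun x : ℝ ↦ ((Real.exp (-x) : ℝ) : ℂ) * (x : ℂ) ^ (c - 1))
  simp only [abs_exp_smul_gammaIntegrand, image_univ, Real.range_exp, integrableOn_univ] at h
  exact h.1 (GammaIntegral_convergent hc)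

theorem integral_cexp_neg_exp_add_mul {c : ℂ} (hc : 0 < c.re) :
    ∫ u : ℝ, cexp (-Real.exp u + c * u) = Gamma c := by
  have h := integral_image_eq_integral_abs_deriv_smul MeasurableSet.univ
    (fun u _ ↦ (Real.hasDerivAt_exp u).hasDerivWithinAt) Real.exp_injective.injOn
    (fun x : ℝ ↦ ((Real.exp (-x) : ℝ) : ℂ) * (x : ℂ) ^ (c - 1))
  simp only [abs_exp_smul_gammaIntegrand, image_univ, Real.range_exp, setIntegral_univ] at h
  rw [Gamma_eq_integral hc, GammaIntegral, h]

theorem tendsto_integral_hankelKernel_ray_atBot {s : ℂ} (hs : s.re < 1) {η : ℝ}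
    (hη : cexp (η * I) = -1) :
    Tendsto (fun ρ ↦ ∫ u : ℝ in Ioi ρ, hankelKernel s (u + η * I)) atBot
      (𝓝 (Gamma (1 - s) * cexp ((1 - s) * η * I))) := by
  have hre : 0 < (1 - s).re := by simpa using hs
  simp only [hankelKernel_ray hη, integral_mul_const, ← integral_cexp_neg_exp_add_mul hre]
  exact ((aecover_Ioi tendsto_id).integral_tendsto_of_countably_generated
    (integrable_cexp_neg_exp_add_mul hre)).mul_const _

theorem norm_hankelKernel_cross_le (s : ℂ) {ρ θ : ℝ} (hρ : ρ ≤ 0) (hθ : |θ| ≤ π) :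
    ‖hankelKernel s (ρ + θ * I)‖ ≤ Real.exp (1 + (1 - s.re) * ρ + |s.im| * π) := by
  have hexp : (cexp (ρ + θ * I)).re ≤ 1 :=
    (re_le_norm _).trans (by rw [Complex.norm_exp]; simpa using hρ)
  have him : s.im * θ ≤ |s.im| * π :=
    (le_abs_self _).trans (by rw [abs_mul]; gcongr)
  have hlin : ((1 - s) * (ρ + θ * I)).re = (1 - s.re) * ρ + s.im * θ := by simp
  rw [hankelKernel, Complex.norm_exp, add_re, hlin, Real.exp_le_exp]
  linarith

theorem tendsto_integral_hankelKernel_cross_atBot {s : ℂ} (hs : s.re < 1) :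
    Tendsto (fun ρ : ℝ ↦ ∫ θ : ℝ in -π..π, hankelKernel s (ρ + θ * I)) atBot (𝓝 0) := by
  have hexponent : Tendsto (fun ρ ↦ 1 + (1 - s.re) * ρ + |s.im| * π) atBot atBot :=
    tendsto_atBot_add_const_right _ _ <| tendsto_atBot_add_const_left _ _ <|
      tendsto_id.const_mul_atBot (sub_pos.2 hs)
  have hbound := (Real.tendsto_exp_atBot.comp hexponent).mul_const |π - -π|
  rw [zero_mul] at hbound
  refine squeeze_zero_norm' ?_ hbound
  filter_upwards [eventually_le_atBot 0] with ρ hρ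
  refine intervalIntegral.norm_integral_le_of_norm_le_const fun θ hθ ↦ ?_
  exact norm_hankelKernel_cross_le s hρ (cross_mem_halfStrip ρ hθ |> add_mul_I_mem_halfStrip.1).2

theorem Gamma_one_sub_mul_sin {s : ℂ} (hs : Gamma (1 - s) ≠ 0) :
    Gamma (1 - s) * Complex.sin (π * s) = π * (Gamma s)⁻¹ := by
  have reflection := Complex.Gamma_mul_Gamma_one_sub s
  by_cases hsin : Complex.sin (π * s) = 0
  · rw [hsin, div_zero, mul_eq_zero, or_iff_left hs] at reflection
    rw [hsin, reflection, inv_zero, mul_zero, mul_zero]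
  · have hπ : (π : ℂ) ≠ 0 := ofReal_ne_zero.2 Real.pi_ne_zero
    have hΓ : Gamma s ≠ 0 := left_ne_zero_of_mul (reflection ▸ div_ne_zero hπ hsin)
    rw [eq_div_iff hsin] at reflection
    rw [eq_mul_inv_iff_mul_eq₀ hΓ]
    linear_combination reflection

theorem hankelIntegral_hankelKernel_of_re_lt_one {s : ℂ} (hs : s.re < 1) (ρ : ℝ) :
    hankelIntegral (hankelKernel s) ρ = 2 * π * I * (Gamma s)⁻¹ := by
  have hlim := ((tendsto_integral_hankelKernel_ray_atBot hs exp_pi_mul_I).sub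
    (tendsto_integral_hankelKernel_ray_atBot hs exp_ofReal_neg_pi_mul_I)).add
    ((tendsto_integral_hankelKernel_cross_atBot hs).const_mul I)
  have hconst : Tendsto (hankelIntegral (hankelKernel s)) atBot
      (𝓝 (hankelIntegral (hankelKernel s) ρ)) :=
    tendsto_const_nhds.congr fun ρ' ↦ hankelIntegral_hankelKernel_eq s ρ ρ'
  have hsin : cexp ((1 - s) * π * I) - cexp ((1 - s) * (-π : ℝ) * I) =
      2 * I * Complex.sin (π * s) := by
    have hpos : (1 - s) * π * I = (π - π * s) * I := by ring
    have hneg : (1 - s) * (-π : ℝ) * I = -(π - π * s) * I := by push_cast; ring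
    rw [hpos, hneg, ← Complex.sin_pi_sub]
    linear_combination (-I) * Complex.two_sin (π - π * s) +
      (cexp ((π - π * s) * I) - cexp (-(π - π * s) * I)) * I_sq
  have hΓ := Gamma_one_sub_mul_sin (Gamma_ne_zero_of_re_pos (s := 1 - s) (by simpa using hs))
  rw [tendsto_nhds_unique hconst hlim]
  linear_combination Gamma (1 - s) * hsin + 2 * I * hΓ

theorem hankelIntegral_hankelKernel_one (ρ : ℝ) :
    hankelIntegral (hankelKernel 1) ρ = 2 * π * I := by
  have mean_value : Real.circleAverage cexp 0 1 = 1 := by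
    rw [Complex.differentiable_exp.diffContOnCl.circleAverage, Complex.exp_zero]
  have periodic : Function.Periodic (fun θ : ℝ ↦ cexp (circleMap 0 1 θ)) (2 * π) :=
    (periodic_circleMap 0 1).comp cexp
  have cross : ∫ θ : ℝ in -π..π, cexp (cexp (θ * I)) = 2 * π := by
    have hper := periodic.intervalIntegral_add_eq (-π) 0
    rw [Real.circleAverage_def, inv_smul_eq_iff₀ (by positivity)] at mean_value
    rw [zero_add, mean_value, show -π + 2 * π = π by ring] at hper
    simpa [circleMap] using hper
  have on_ray {η : ℝ} (hη : cexp (η * I) = -1) (u : ℝ) :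
      hankelKernel 1 (u + η * I) = cexp (-Real.exp u) := by
    simp [hankelKernel_ray hη]
  rw [hankelIntegral_hankelKernel_eq 1 ρ 0, hankelIntegral]
  simp only [on_ray exp_pi_mul_I, on_ray exp_ofReal_neg_pi_mul_I]
  simp only [hankelKernel, sub_self, ofReal_zero, zero_add, zero_mul, add_zero, cross]
  ring

theorem hankelIntegral_hankelKernel (s : ℂ) (ρ : ℝ) :
    hankelIntegral (hankelKernel s) ρ = 2 * π * I * (Gamma s)⁻¹ := by
  obtain ⟨n, hn⟩ := exists_nat_gt (s.re - 1)
  replace hn : s.re < n + 1 := by linarith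
  induction n generalizing s with
  | zero => exact hankelIntegral_hankelKernel_of_re_lt_one (by simpa using hn) ρ
  | succ n ih =>
    rcases eq_or_ne s 1 with rfl | hs
    · rw [hankelIntegral_hankelKernel_one, Gamma_one, inv_one, mul_one]
    · have hprev := ih (s - 1) (by push_cast at hn; simp only [sub_re, one_re]; linarith)
      rw [hankelIntegral_hankelKernel_eq_mul_add_one,
        one_div_Gamma_eq_self_mul_one_div_Gamma_add_one, sub_add_cancel] at hprev
      exact mul_left_cancel₀ (sub_ne_zero.2 hs) (by linear_combination hprev)

/-! ### The Mittag–Leffler function on the negative real axis -/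

/-- The integrand `e ^ z * z ^ (a - b) / (z ^ a + x) dz` of the Hankel-type representation of
`E_{a,b}(-x)` in the coordinate `z = exp w`. -/
noncomputable def mittagLefflerKernel (a b x : ℝ) (w : ℂ) : ℂ :=
  hankelKernel (b - a) w / (cexp (a * w) + x)

-- Rotating by half the argument of `exp w` makes the real parts of both summands nonnegative.
theorem mul_cos_half_im_le_norm_exp_add {x : ℝ} {w : ℂ} (hw : |w.im| ≤ π) :
    x * Real.cos (w.im / 2) ≤ ‖cexp w + x‖ := by
  set φ := w.im / 2 with hφ
  have hcos : 0 ≤ Real.cos φ := by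
    obtain ⟨hlow, hhigh⟩ := abs_le.1 hw
    exact Real.cos_nonneg_of_neg_pi_div_two_le_of_le (by linarith) (by linarith)
  have hrot : (cexp w + x) * cexp ((-φ : ℝ) * I) =
      cexp (w.re + φ * I) + x * cexp ((-φ : ℝ) * I) := by
    have hexp : w + (-φ : ℝ) * I = w.re + φ * I := by
      apply Complex.ext <;> simp [hφ]
      ring
    rw [add_mul, ← Complex.exp_add, hexp]
  have hre : (cexp (w.re + φ * I) + x * cexp ((-φ : ℝ) * I)).re =
      Real.exp w.re * Real.cos φ + x * Real.cos φ := by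
    simp [exp_re, exp_im]
  calc x * Real.cos φ
      ≤ Real.exp w.re * Real.cos φ + x * Real.cos φ := le_add_of_nonneg_left (by positivity)
    _ ≤ ‖(cexp w + x) * cexp ((-φ : ℝ) * I)‖ := by rw [← hre, hrot]; exact re_le_norm _
    _ = ‖cexp w + x‖ := by rw [norm_mul, norm_exp_ofReal_mul_I, mul_one]

theorem tendsto_ofReal_div_add_atTop (z : ℂ) :
    Tendsto (fun x : ℝ ↦ (x : ℂ) / (z + x)) atTop (𝓝 1) := by
  have hinv : Tendsto (fun x : ℝ ↦ (x : ℂ)⁻¹) atTop (𝓝 0) :=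
    tendsto_inv₀_cobounded.comp (RCLike.tendsto_ofReal_atTop_cobounded ℂ)
  have hlim := ((hinv.const_mul z).add_const 1).inv₀ (by simp)
  rw [mul_zero, zero_add, inv_one] at hlim
  refine hlim.congr' ?_
  filter_upwards [eventually_ne_atTop 0] with x hx
  have hx' : (x : ℂ) ≠ 0 := ofReal_ne_zero.2 hx
  rw [← inv_div, add_div, div_self hx', div_eq_mul_inv]

theorem cos_mul_pi_div_two_pos {a : ℝ} (ha : a ∈ Ioo (0 : ℝ) 1) : 0 < Real.cos (a * π / 2) :=
  Real.cos_pos_of_mem_Ioo ⟨by nlinarith [ha.1, Real.pi_pos], by nlinarith [ha.2, Real.pi_pos]⟩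

theorem mul_cos_le_norm_exp_mul_add {a x : ℝ} (ha : a ∈ Ioo (0 : ℝ) 1) (hx : 0 ≤ x) {w : ℂ}
    (hw : |w.im| ≤ π) :
    x * Real.cos (a * π / 2) ≤ ‖cexp (a * w) + x‖ := by
  have him : |a * w.im| ≤ a * π := by
    rw [abs_mul, abs_of_pos ha.1]
    exact mul_le_mul_of_nonneg_left hw ha.1.le
  have ha_pi : a * π ≤ π := mul_le_of_le_one_left Real.pi_pos.le ha.2.le
  have hcos : Real.cos (a * π / 2) ≤ Real.cos (a * w.im / 2) := by
    rw [← Real.cos_abs (a * w.im / 2), abs_div, abs_two]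
    exact Real.cos_le_cos_of_nonneg_of_le_pi (by positivity) (by linarith [Real.pi_pos])
      (by linarith)
  have hbound := mul_cos_half_im_le_norm_exp_add (x := x) (w := a * w)
    (by rw [im_ofReal_mul]; exact him.trans ha_pi)
  rw [im_ofReal_mul] at hbound
  exact (mul_le_mul_of_nonneg_left hcos hx).trans hbound

theorem exp_mul_add_ne_zero {a x : ℝ} (ha : a ∈ Ioo (0 : ℝ) 1) (hx : 0 < x) {w : ℂ}
    (hw : |w.im| ≤ π) : cexp (a * w) + x ≠ 0 :=
  norm_pos_iff.1 <| (mul_pos hx (cos_mul_pi_div_two_pos ha)).trans_le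
    (mul_cos_le_norm_exp_mul_add ha hx.le hw)

theorem differentiableOn_mittagLefflerKernel {a x : ℝ} (ha : a ∈ Ioo (0 : ℝ) 1) (b : ℝ)
    (hx : 0 < x) (ρ : ℝ) :
    DifferentiableOn ℂ (mittagLefflerKernel a b x) (halfStrip ρ) :=
  (differentiable_hankelKernel _).differentiableOn.div (by fun_prop)
    fun _ hw ↦ exp_mul_add_ne_zero ha hx hw.2

theorem norm_mul_mittagLefflerKernel_le {a x : ℝ} (ha : a ∈ Ioo (0 : ℝ) 1) (b : ℝ)
    (hx : 0 < x) {w : ℂ} (hw : |w.im| ≤ π) :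
    ‖x * mittagLefflerKernel a b x w‖ ≤
      ‖(Real.cos (a * π / 2) : ℂ)⁻¹ * hankelKernel (b - a) w‖ := by
  have hcos := cos_mul_pi_div_two_pos ha
  have hden := mul_cos_le_norm_exp_mul_add ha hx.le hw
  rw [mittagLefflerKernel, norm_mul, norm_div, norm_mul, norm_inv, norm_real, norm_real,
    Real.norm_of_nonneg hx.le, Real.norm_of_nonneg hcos.le]
  calc x * (‖hankelKernel (b - a) w‖ / ‖cexp (a * w) + x‖)
      ≤ x * (‖hankelKernel (b - a) w‖ / (x * Real.cos (a * π / 2))) := by gcongr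
    _ = (Real.cos (a * π / 2))⁻¹ * ‖hankelKernel (b - a) w‖ := by field_simp

theorem hankelIntegrable_mittagLefflerKernel {a x : ℝ} (ha : a ∈ Ioo (0 : ℝ) 1) (b : ℝ)
    (hx : 0 < x) (ρ : ℝ) :
    HankelIntegrable (mittagLefflerKernel a b x) ρ := by
  refine (hankelIntegrable_hankelKernel (b - a) ρ).mono (C := (x * Real.cos (a * π / 2))⁻¹)
    (differentiableOn_mittagLefflerKernel ha b hx ρ).continuousOn fun w hw ↦ ?_
  have := mul_pos hx (cos_mul_pi_div_two_pos ha)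
  rw [mittagLefflerKernel, norm_div, div_eq_inv_mul]
  gcongr
  exact mul_cos_le_norm_exp_mul_add ha hx.le hw.2

theorem pow_mul_hankelKernel (a b x : ℝ) (w : ℂ) (n : ℕ) :
    (-x : ℂ) ^ n * hankelKernel (a * n + b) w =
      hankelKernel b w * (-x * cexp (-(a * w))) ^ n := by
  rw [add_comm, hankelKernel_add, mul_pow, ← Complex.exp_nat_mul]
  ring_nf

theorem norm_neg_mul_exp_neg {x : ℝ} (hx : 0 ≤ x) (a : ℝ) (w : ℂ) :
    ‖-x * cexp (-(a * w))‖ = x * Real.exp (-(a * w.re)) := by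
  rw [norm_mul, norm_neg, norm_real, Real.norm_of_nonneg hx, Complex.norm_exp, neg_re,
    re_ofReal_mul]

theorem mul_exp_neg_lt_one {x y : ℝ} (hx : x < Real.exp y) : x * Real.exp (-y) < 1 := by
  rwa [Real.exp_neg, ← div_eq_mul_inv, div_lt_one (Real.exp_pos y)]

theorem hasSum_mittagLefflerKernel {a x : ℝ} (b : ℝ) {w : ℂ} (hx : 0 ≤ x)
    (hxw : x < Real.exp (a * w.re)) :
    HasSum (fun n : ℕ ↦ (-x : ℂ) ^ n * hankelKernel (a * n + b) w)
      (mittagLefflerKernel a b x w) := by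
  have hratio : ‖-x * cexp (-(a * w))‖ < 1 :=
    (norm_neg_mul_exp_neg hx a w).trans_lt (mul_exp_neg_lt_one hxw)
  have hsum : mittagLefflerKernel a b x w =
      hankelKernel b w * (1 - -x * cexp (-(a * w)))⁻¹ := by
    have hden : cexp (a * w) + x = cexp (a * w) * (1 - -x * cexp (-(a * w))) := by
      rw [Complex.exp_neg]
      field_simp [Complex.exp_ne_zero]
      ring
    rw [mittagLefflerKernel, sub_eq_add_neg, hankelKernel_add, neg_mul, neg_neg, hden,
      mul_comm (hankelKernel _ _), mul_div_mul_left _ _ (Complex.exp_ne_zero _), div_eq_mul_inv,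
      neg_mul]
  simp only [pow_mul_hankelKernel, hsum]
  exact (hasSum_geometric_of_norm_lt_one hratio).mul_left _

theorem hasSum_hankelIntegral_mittagLefflerKernel {a x ρ : ℝ} (b : ℝ) (ha : 0 ≤ a) (hx : 0 ≤ x)
    (hρ : x < Real.exp (a * ρ)) :
    HasSum (fun n : ℕ ↦ (-x : ℂ) ^ n * (2 * π * I * (Gamma (a * n + b))⁻¹))
      (hankelIntegral (mittagLefflerKernel a b x) ρ) := by
  simp only [← hankelIntegral_hankelKernel _ ρ, ← hankelIntegral_const_mul]
  refine hasSum_hankelIntegral_of_dominated (q := fun n ↦ (x * Real.exp (-(a * ρ))) ^ n)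
    (fun n ↦ ((differentiable_hankelKernel _).continuous.const_mul _).continuousOn)
    (hankelIntegrable_hankelKernel b ρ)
    (summable_geometric_of_lt_one (by positivity) (mul_exp_neg_lt_one hρ))
    (fun n w hw ↦ ?_) fun w hw ↦ hasSum_mittagLefflerKernel b hx (hρ.trans_le ?_)
  · rw [pow_mul_hankelKernel, norm_mul, norm_pow, norm_neg_mul_exp_neg hx]
    have := hw.1
    gcongr
  · have := hw.1
    gcongr

theorem hankelIntegral_mittagLefflerKernel {a x : ℝ} (ha : a ∈ Ioo (0 : ℝ) 1) (b : ℝ) (hx : 0 < x) :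
    hankelIntegral (mittagLefflerKernel a b x) 0 = 2 * π * I * mittagLefflerReal a b (-x) := by
  have hρ : x < Real.exp (a * (x / a)) := by
    rw [mul_div_cancel₀ x ha.1.ne']
    linarith [Real.add_one_le_exp x]
  rw [hankelIntegral_eq_of_differentiableOn (div_nonneg hx.le ha.1.le)
      (differentiableOn_mittagLefflerKernel ha b hx 0)
      (hankelIntegrable_mittagLefflerKernel ha b hx 0),
    ← (hasSum_hankelIntegral_mittagLefflerKernel b ha.1.le hx.le hρ).tsum_eq, mittagLefflerReal,
    ofReal_tsum, ← tsum_mul_left]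
  congr 1 with n
  rw [← ofReal_natCast, ← ofReal_mul, ← ofReal_add, Gamma_ofReal]
  push_cast
  ring

theorem tendsto_mul_mittagLefflerReal_neg_atTop {a : ℝ} (ha : a ∈ Ioo (0 : ℝ) 1) (b : ℝ) :
    Tendsto (fun x ↦ x * mittagLefflerReal a b (-x)) atTop (𝓝 (Real.Gamma (b - a))⁻¹) := by
  have hlim : Tendsto (fun x : ℝ ↦ hankelIntegral (fun w ↦ x * mittagLefflerKernel a b x w) 0) atTop
      (𝓝 (hankelIntegral (hankelKernel (b - a)) 0)) := by
    refine tendsto_hankelIntegral_of_dominated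
      (g := fun w ↦ (Real.cos (a * π / 2) : ℂ)⁻¹ * hankelKernel (b - a) w) ?_ ?_ ?_ fun w _ ↦ ?_
    · filter_upwards [eventually_gt_atTop 0] with x hx
      exact (differentiableOn_mittagLefflerKernel ha b hx 0).continuousOn.const_mul _
    · exact (hankelIntegrable_hankelKernel (b - a) 0).const_mul _
    · filter_upwards [eventually_gt_atTop 0] with x hx w hw
      exact norm_mul_mittagLefflerKernel_le ha b hx hw.2
    · simpa only [mittagLefflerKernel, mul_div_left_comm, mul_one] using
        (tendsto_ofReal_div_add_atTop (cexp (a * w))).const_mul (hankelKernel (b - a) w)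
  rw [hankelIntegral_hankelKernel, ← ofReal_sub, Gamma_ofReal, ← ofReal_inv] at hlim
  rw [← tendsto_ofReal_iff]
  refine ((hlim.const_mul (2 * π * I)⁻¹).congr' ?_).trans_eq ?_
  · filter_upwards [eventually_gt_atTop 0] with x hx
    rw [hankelIntegral_const_mul, hankelIntegral_mittagLefflerKernel ha b hx, mul_left_comm (x : ℂ),
      inv_mul_cancel_left₀ two_pi_I_ne_zero, ofReal_mul]
  · rw [inv_mul_cancel_left₀ two_pi_I_ne_zero]

theorem isTheta_mittagLefflerReal_neg {a b : ℝ} (ha : a ∈ Ioo (0 : ℝ) 1)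
    (hb : ∀ m : ℕ, b - a ≠ -m) :
    (fun x ↦ mittagLefflerReal a b (-x)) =Θ[atTop] fun x ↦ x⁻¹ := by
  refine (isTheta_of_div_tendsto_nhds_ne_zero (c := (Real.Gamma (b - a))⁻¹) ?_
    (inv_ne_zero (Real.Gamma_ne_zero hb))).symm
  simpa only [div_inv_eq_mul, mul_comm] using tendsto_mul_mittagLefflerReal_neg_atTop ha b

theorem exists_forall_sq_mul_rpow_of_eventually {p : ℝ → Prop} (hp : ∀ᶠ x in atTop, p x)
    {a τ : ℝ} (ha : 0 ≤ a) (hτ : 0 < τ) :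
    ∃ L > 0, ∀ t lam : ℝ, τ ≤ t → L ≤ lam → p (lam ^ 2 * t ^ a) := by
  have hgrowth : Tendsto (fun lam : ℝ ↦ lam ^ 2 * τ ^ a) atTop atTop :=
    (tendsto_pow_atTop two_ne_zero).atTop_mul_const (Real.rpow_pos_of_pos hτ a)
  obtain ⟨X, hX⟩ := eventually_atTop.1 hp
  obtain ⟨L, hL⟩ := eventually_atTop.1 (hgrowth.eventually_ge_atTop X)
  refine ⟨max L 1, by positivity, fun t lam ht hlam ↦ hX _ ?_⟩
  refine (hL lam (le_of_max_le_left hlam)).trans ?_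
  gcongr

theorem mittagLeffler_comparison_estimate_general {a b c τ : ℝ} (ha : a ∈ Ioo (0 : ℝ) 1)
    (hb : ∀ m : ℕ, b - a ≠ -m) (hc : ∀ m : ℕ, c - a ≠ -m) (hτ : 0 < τ) :
    ∃ C₁ > 0, ∃ C₂ > 0, ∃ lamStar > 0, ∀ t lam : ℝ, τ ≤ t → lamStar ≤ lam →
      C₁ * |mittagLefflerReal a b (-(lam ^ 2) * t ^ a)| ≤
          |mittagLefflerReal a c (-(lam ^ 2) * t ^ a)| ∧
        |mittagLefflerReal a c (-(lam ^ 2) * t ^ a)| ≤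
          C₂ * |mittagLefflerReal a b (-(lam ^ 2) * t ^ a)| := by
  have hΘ := (isTheta_mittagLefflerReal_neg ha hc).trans (isTheta_mittagLefflerReal_neg ha hb).symm
  obtain ⟨C₂, hC₂, hle⟩ := hΘ.1.exists_pos
  obtain ⟨C₁, hC₁, hge⟩ := hΘ.2.exists_pos
  obtain ⟨lamStar, hpos, hbounds⟩ :=
    exists_forall_sq_mul_rpow_of_eventually (hge.bound.and hle.bound) ha.1.le hτ
  refine ⟨C₁⁻¹, inv_pos.2 hC₁, C₂, hC₂, lamStar, hpos, fun t lam ht hlam ↦ ?_⟩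
  simp only [neg_mul, inv_mul_le_iff₀ hC₁]
  exact hbounds t lam ht hlam

/-- For `α ∈ (0,1/2)`, `T > 0` and `δ ∈ (0,1)` there are `C₁, C₂, λ* > 0` such that for all
`t ∈ [δT, T]` and `λ ≥ λ*`:
`C₁ |E_{2α,1}(−λ² t^{2α})| ≤ |E_{2α,α}(−λ² t^{2α})| ≤ C₂ |E_{2α,1}(−λ² t^{2α})|`. -/
theorem mittagLeffler_comparison_estimate (α T δ : ℝ) (hα : α ∈ Set.Ioo (0 : ℝ) (1 / 2))
    (hT : 0 < T) (hδ : δ ∈ Set.Ioo (0 : ℝ) 1) :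
    ∃ C₁ > 0, ∃ C₂ > 0, ∃ lamStar > 0, ∀ t lam : ℝ,
      t ∈ Set.Icc (δ * T) T → lamStar ≤ lam →
      C₁ * |mittagLefflerReal (2 * α) 1 (-(lam ^ 2) * t ^ (2 * α))| ≤
          |mittagLefflerReal (2 * α) α (-(lam ^ 2) * t ^ (2 * α))| ∧
        |mittagLefflerReal (2 * α) α (-(lam ^ 2) * t ^ (2 * α))| ≤
          C₂ * |mittagLefflerReal (2 * α) 1 (-(lam ^ 2) * t ^ (2 * α))| := by
  obtain ⟨hα_pos, hα_lt⟩ := hα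
  have hone (m : ℕ) : 1 - 2 * α ≠ -m := by linarith [m.cast_nonneg (α := ℝ)]
  have hα_sub : ∀ m : ℕ, α - 2 * α ≠ -m
    | 0 => by norm_num; linarith
    | m + 1 => by push_cast; linarith [m.cast_nonneg (α := ℝ)]
  obtain ⟨C₁, hC₁, C₂, hC₂, lamStar, hpos, hbounds⟩ := mittagLeffler_comparison_estimate_general
    ⟨by linarith, by linarith⟩ hone hα_sub (mul_pos hδ.1 hT)
  exact ⟨C₁, hC₁, C₂, hC₂, lamStar, hpos, fun t lam ht ↦ hbounds t lam ht.1⟩
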